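/- arXiv:math/9909053 — 2 statements merged into one kernel-verified Lean document; each statement's English description precedes it below -/
import Mathlib

section
/- Let q, a, B be nonzero complex numbers such that q^m ≠ 1 for all m ≥ 1, a^2 q^{2m} ≠ 1 and a^4 q^{4m} ≠ 1 for all m ≥ 1, and a^2 q^{2j} ≠ -1 and a^4 q^{4j+2} ≠ B^2 for all j ≥ 0 (so that all denominators below are nonzero). Suppose (α_n, β_n) is a Bailey pair with parameters (a^2, q^2). Define γ_n = ∑_{k=0}^{n} [(qa^2/B;q^2)_{2n-k} (-Bq;q^2)_k / ((-q^2 a^2;q^2)_{2n} (a^4 q^2/B^2;q^4)_n (q^4;q^4)_{n-k})] · a^{2k} B^{-k} q^{k^2} · β_k and α'_r = ((-Bq;q^2)_r / (-q a^2/B;q^2)_r) · a^{2r} B^{-r} q^{r^2} · α_r. Then (α'_n, γ_n) is a Bailey pair with parameters (a^4, q^4). -/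
/-- The finite q-Pochhammer symbol `(x;q)_n = ∏_{j=0}^{n-1} (1 - x q^j)`. -/
noncomputable def qPoch (x q : ℂ) (n : ℕ) : ℂ := ∏ j ∈ Finset.range n, (1 - x * q ^ j)

/-- `(α, β)` is a Bailey pair with parameters `(a, q)`. -/
def IsBaileyPair (a q : ℂ) (α β : ℕ → ℂ) : Prop :=
  ∀ n : ℕ, β n = ∑ r ∈ Finset.range (n + 1), α r / (qPoch q q (n - r) * qPoch (a * q) q (n + r))

/-!
Substituting the Bailey relation for `β` into `γ` and exchanging the two sums, the theorem becomes
a closed form for a sum over `k` for each fixed pair `r ≤ n`. Put `p = q²`, `b = Bq` and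
`c = qa²/B`, so that `bc = a²q²`. After the shift `k = r + j`, `n = r + N` the sum for `r` is, up
to factors independent of `j`, the sum for `r = 0` with `(b, c)` replaced by `(b pʳ, c pʳ)`, and the
latter is an instance of the `q`-Pfaff–Saalschütz summation in which one numerator parameter is
`-p⁻ᴺ`: this parameter contributes `1 / (-p; p)_{N-j}`, which turns `(p; p)_{N-j}` in the
denominator into `(p²; p²)_{N-j}` and so changes the base.
-/

open Finset

section qPoch

variable (x p : ℂ) {y : ℂ} {i j m n : ℕ}

lemma qPoch_zero : qPoch x p 0 = 1 :=
  prod_range_zero _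

lemma qPoch_succ (n : ℕ) : qPoch x p (n + 1) = qPoch x p n * (1 - x * p ^ n) :=
  prod_range_succ _ _

lemma qPoch_add (m n : ℕ) : qPoch x p (m + n) = qPoch x p m * qPoch (x * p ^ m) p n := by
  simp only [qPoch, prod_range_add, pow_add, mul_assoc]

lemma qPoch_succ' (n : ℕ) : qPoch x p (n + 1) = (1 - x) * qPoch (x * p) p n := by
  rw [add_comm, qPoch_add, qPoch_succ, qPoch_zero, pow_zero, pow_one, mul_one, one_mul]

lemma qPoch_sq_sq (n : ℕ) : qPoch (x ^ 2) (p ^ 2) n = qPoch x p n * qPoch (-x) p n := by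
  simp only [qPoch, ← prod_mul_distrib]
  exact prod_congr rfl fun i _ => by ring

variable {x p}

lemma qPoch_ne_zero_of_forall (h : ∀ j : ℕ, x * p ^ j ≠ 1) (n : ℕ) : qPoch x p n ≠ 0 :=
  prod_ne_zero_iff.mpr fun j _ => sub_ne_zero.mpr (h j).symm

lemma qPoch_ne_zero_of_le (h : qPoch x p n ≠ 0) (hmn : m ≤ n) : qPoch x p m ≠ 0 := by
  rw [← Nat.add_sub_cancel' hmn, qPoch_add] at h
  exact left_ne_zero_of_mul h

lemma qPoch_mul_qPoch_mul_neg_pow (h : x * p ^ (i + j) * y = 1) :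
    qPoch (x * p) p i * qPoch y p j * (-(x * p ^ (i + j))) ^ j =
      p ^ j.choose 2 * qPoch (x * p) p (i + j) := by
  induction j generalizing i with
  | zero => simp [qPoch_zero]
  | succ j ih =>
    have shift : i + 1 + j = i + (j + 1) := by ring
    have ih' := ih (i := i + 1) (by rwa [shift])
    have factor : (1 - y * p ^ j) * -(x * p ^ (i + (j + 1))) = p ^ j * (1 - x * p * p ^ i) := by
      linear_combination p ^ j * h
    rw [shift, qPoch_succ] at ih'
    rw [qPoch_succ, Nat.choose_succ_succ' j 1, Nat.choose_one_right, pow_add, pow_succ]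
    linear_combination p ^ j * ih' +
      qPoch (x * p) p i * qPoch y p j * (-(x * p ^ (i + (j + 1)))) ^ j * factor

end qPoch

section Saalschutz

/-- The summand at `(j, k)`, `j + k = N`, of the `q`-Pfaff–Saalschütz sum. In the usual notation
this is the `j`-th term of `₃φ₂(u, v, p⁻ᴺ; uvz, p¹⁻ᴺ/z; p, p)`, multiplied by
`(uvz; p)_N (z; p)_N / (p; p)_N` so that it makes sense for all `u`, `v`, `z`. -/
noncomputable def saalschutzTerm (u v z p : ℂ) (j k : ℕ) : ℂ :=
  qPoch (u * v * z * p ^ j) p k * qPoch z p k * qPoch u p j * qPoch v p j * z ^ j /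
    (qPoch p p j * qPoch p p k)

/-- The part of `(1 - pʲ⁺ᵏ) * saalschutzTerm u v z p j k` that cancels a factor of `(p; p)_k`,
according to `(1 - pʲ⁺ᵏ)(1 - z) = (1 - pᵏ)(pʲ - z) + (1 - pʲ)(1 - z pᵏ)`. The truncated `k - 1` at
`k = 0` is harmless because of the factor `1 - pᵏ`. -/
noncomputable def saalschutzSndPart (u v z p : ℂ) (j k : ℕ) : ℂ :=
  (1 - p ^ k) * (p ^ j - z) * qPoch (u * v * z * p ^ j) p k * qPoch (z * p) p (k - 1) *
    qPoch u p j * qPoch v p j * z ^ j / (qPoch p p j * qPoch p p k)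

/-- The part of `(1 - pʲ⁺ᵏ) * saalschutzTerm u v z p j k` that cancels a factor of `(p; p)_j`; see
`saalschutzSndPart`. -/
noncomputable def saalschutzFstPart (u v z p : ℂ) (j k : ℕ) : ℂ :=
  (1 - p ^ j) * qPoch (u * v * z * p ^ j) p k * qPoch (z * p) p k *
    qPoch u p j * qPoch v p j * z ^ j / (qPoch p p j * qPoch p p k)

lemma one_sub_pow_mul_saalschutzTerm (u v z p : ℂ) (j k : ℕ) :
    (1 - p ^ (j + k)) * saalschutzTerm u v z p j k =
      saalschutzSndPart u v z p j k + saalschutzFstPart u v z p j k := by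
  cases k with
  | zero =>
    simp only [saalschutzSndPart, saalschutzFstPart, saalschutzTerm, qPoch_zero]
    ring
  | succ k =>
    simp only [saalschutzSndPart, saalschutzFstPart, saalschutzTerm, Nat.add_sub_cancel,
      qPoch_succ' z, qPoch_succ (z * p)]
    ring

variable {u v z p : ℂ} {N : ℕ}

lemma saalschutzSndPart_add_saalschutzFstPart {j k : ℕ} (hj : qPoch p p (j + 1) ≠ 0)
    (hk : qPoch p p (k + 1) ≠ 0) :
    saalschutzSndPart u v z p j (k + 1) + saalschutzFstPart u v z p (j + 1) k =
      (1 - u * z) * (1 - v * z) * saalschutzTerm u v (z * p) p j k := by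
  rw [qPoch_succ, ← pow_succ', mul_ne_zero_iff] at hj hk
  obtain ⟨hj₀, hj₁⟩ := hj
  obtain ⟨hk₀, hk₁⟩ := hk
  simp only [saalschutzSndPart, saalschutzFstPart, saalschutzTerm, Nat.add_sub_cancel,
    qPoch_succ p, qPoch_succ u, qPoch_succ v, qPoch_succ' (u * v * z * p ^ j), ← pow_succ']
  rw [show u * v * (z * p) * p ^ j = u * v * z * p ^ (j + 1) by ring, mul_assoc _ (p ^ j) p,
    ← pow_succ]
  field_simp
  ring

lemma sum_antidiagonal_saalschutzTerm_succ (hp : qPoch p p (N + 1) ≠ 0) :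
    (1 - p ^ (N + 1)) * ∑ jk ∈ antidiagonal (N + 1), saalschutzTerm u v z p jk.1 jk.2 =
      (1 - u * z) * (1 - v * z) *
        ∑ jk ∈ antidiagonal N, saalschutzTerm u v (z * p) p jk.1 jk.2 := by
  have snd_zero : saalschutzSndPart u v z p (N + 1) 0 = 0 := by simp [saalschutzSndPart]
  have fst_zero : saalschutzFstPart u v z p 0 (N + 1) = 0 := by simp [saalschutzFstPart]
  calc
    _ = ∑ jk ∈ antidiagonal (N + 1),
          (saalschutzSndPart u v z p jk.1 jk.2 + saalschutzFstPart u v z p jk.1 jk.2) := by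
      rw [mul_sum]
      refine sum_congr rfl fun jk hjk => ?_
      rw [← mem_antidiagonal.mp hjk, one_sub_pow_mul_saalschutzTerm]
    _ = ∑ jk ∈ antidiagonal N,
          (saalschutzSndPart u v z p jk.1 (jk.2 + 1) +
            saalschutzFstPart u v z p (jk.1 + 1) jk.2) := by
      rw [sum_add_distrib, Nat.sum_antidiagonal_succ', Nat.sum_antidiagonal_succ, snd_zero,
        fst_zero, zero_add, zero_add, sum_add_distrib]
    _ = _ := by
      rw [mul_sum]
      refine sum_congr rfl fun ⟨j, k⟩ hjk => ?_
      obtain rfl : j + k = N := mem_antidiagonal.mp hjk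
      exact saalschutzSndPart_add_saalschutzFstPart (qPoch_ne_zero_of_le hp (by omega))
        (qPoch_ne_zero_of_le hp (by omega))

theorem sum_antidiagonal_saalschutzTerm (hp : qPoch p p N ≠ 0) :
    ∑ jk ∈ antidiagonal N, saalschutzTerm u v z p jk.1 jk.2 =
      qPoch (v * z) p N * qPoch (u * z) p N / qPoch p p N := by
  induction N generalizing z with
  | zero => simp [saalschutzTerm, qPoch_zero]
  | succ N ih =>
    have hpN : qPoch p p N ≠ 0 := qPoch_ne_zero_of_le hp N.le_succ
    have recurrence := sum_antidiagonal_saalschutzTerm_succ (u := u) (v := v) (z := z) hp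
    rw [qPoch_succ, ← pow_succ'] at hp
    have hpN₁ := right_ne_zero_of_mul hp
    rw [ih hpN, ← mul_assoc v, ← mul_assoc u] at recurrence
    refine mul_left_cancel₀ hpN₁ (recurrence.trans ?_)
    rw [qPoch_succ p, ← pow_succ', qPoch_succ' (v * z), qPoch_succ' (u * z)]
    field_simp

end Saalschutz

lemma pow_add_mul_pow_choose_two (c p : ℂ) (r j : ℕ) :
    c ^ (r + j) * p ^ (r + j).choose 2 =
      c ^ r * p ^ r.choose 2 * ((c * p ^ r) ^ j * p ^ j.choose 2) := by
  induction j with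
  | zero => simp
  | succ j ih =>
    rw [← add_assoc, Nat.choose_succ_succ' _ 1, Nat.choose_succ_succ' j 1, Nat.choose_one_right,
      Nat.choose_one_right]
    linear_combination c * p ^ (r + j) * ih

section BaseChange

variable {b c p : ℂ}

lemma qPoch_div_eq_mul_saalschutzTerm {y : ℂ} {j k : ℕ} (hy : -1 * p ^ (k + j) * y = 1)
    (hp : qPoch (p ^ 2) (p ^ 2) (k + j) ≠ 0) (hbc : qPoch (b * c) p (k + j) ≠ 0) :
    qPoch c p (k + j + k) * qPoch (-b) p j * (c ^ j * p ^ j.choose 2) /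
        (qPoch (p ^ 2) (p ^ 2) k * qPoch p p j * qPoch (b * c) p j) =
      qPoch c p (k + j) / (qPoch (b * c) p (k + j) * qPoch (-p) p (k + j)) *
        saalschutzTerm y (-b) (c * p ^ (k + j)) p j k := by
  have reversal := qPoch_mul_qPoch_mul_neg_pow hy
  simp only [neg_mul, one_mul, neg_neg] at reversal
  have huvz : y * -b * (c * p ^ (k + j)) = b * c := by linear_combination b * c * hy
  rw [qPoch_sq_sq] at hp
  obtain ⟨hp₁, hp₂⟩ := mul_ne_zero_iff.mp hp
  have hp₁j := qPoch_ne_zero_of_le hp₁ (Nat.le_add_left j k)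
  have hp₁k := qPoch_ne_zero_of_le hp₁ (Nat.le_add_right k j)
  have hp₂k := qPoch_ne_zero_of_le hp₂ (Nat.le_add_right k j)
  have hbc_split : qPoch (b * c) p (k + j) = qPoch (b * c) p j * qPoch (b * c * p ^ j) p k := by
    rw [add_comm, qPoch_add]
  rw [hbc_split] at hbc ⊢
  obtain ⟨hbc₁, hbc₂⟩ := mul_ne_zero_iff.mp hbc
  rw [saalschutzTerm, huvz, qPoch_add c p (k + j) k, qPoch_sq_sq, mul_pow, div_mul_div_comm,
    div_eq_div_iff (by positivity) (by positivity)]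
  linear_combination (-(qPoch c p (k + j) * qPoch (c * p ^ (k + j)) p k * qPoch (-b) p j * c ^ j *
    qPoch (b * c) p j * qPoch (b * c * p ^ j) p k * qPoch p p k * qPoch p p j)) * reversal

lemma sum_antidiagonal_qPoch_sq (hp₀ : p ≠ 0) {N : ℕ} (hp : qPoch (p ^ 2) (p ^ 2) N ≠ 0)
    (hbc : qPoch (b * c) p N ≠ 0) :
    ∑ jk ∈ antidiagonal N, qPoch c p (N + jk.2) * qPoch (-b) p jk.1 *
        (c ^ jk.1 * p ^ jk.1.choose 2) /
          (qPoch (p ^ 2) (p ^ 2) jk.2 * qPoch p p jk.1 * qPoch (b * c) p jk.1) =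
      qPoch (-(b * c * p ^ N)) p N * qPoch (c ^ 2) (p ^ 2) N /
        (qPoch (p ^ 2) (p ^ 2) N * qPoch (b * c) p N) := by
  have hpN : qPoch p p N * qPoch (-p) p N ≠ 0 := by rwa [← qPoch_sq_sq]
  obtain ⟨hp₁, hp₂⟩ := mul_ne_zero_iff.mp hpN
  obtain ⟨y, hy⟩ : ∃ y, -1 * p ^ N * y = 1 := ⟨-(p ^ N)⁻¹, by field_simp⟩
  have hvz : -b * (c * p ^ N) = -(b * c * p ^ N) := by ring
  have huz : y * (c * p ^ N) = -c := by linear_combination -c * hy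
  calc
    _ = ∑ jk ∈ antidiagonal N, qPoch c p N / (qPoch (b * c) p N * qPoch (-p) p N) *
          saalschutzTerm y (-b) (c * p ^ N) p jk.1 jk.2 := by
      refine sum_congr rfl fun ⟨j, k⟩ hjk => ?_
      obtain rfl : k + j = N := (add_comm k j).trans (mem_antidiagonal.mp hjk)
      exact qPoch_div_eq_mul_saalschutzTerm hy hp hbc
    _ = _ := by
      rw [← mul_sum, sum_antidiagonal_saalschutzTerm hp₁, hvz, huz, qPoch_sq_sq c, qPoch_sq_sq p]
      field_simp

/-- The coefficient of `β k` in the `n`-th term of the new Bailey pair, in terms of `b = Bq`,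
`c = qa²/B` and `p = q²`; the factor `a²ᵏ B⁻ᵏ q^(k²)` becomes `cᵏ p^(k choose 2)`. -/
noncomputable def baseChangeKernel (b c p : ℂ) (n k : ℕ) : ℂ :=
  qPoch c p (2 * n - k) * qPoch (-b) p k /
      (qPoch (-(b * c)) p (2 * n) * qPoch (c ^ 2) (p ^ 2) n * qPoch (p ^ 2) (p ^ 2) (n - k)) *
    (c ^ k * p ^ k.choose 2)

/-- The factor by which the base change multiplies `α r`, in the variables of
`baseChangeKernel`. -/
noncomputable def baseChangeWeight (b c p : ℂ) (r : ℕ) : ℂ :=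
  qPoch (-b) p r / qPoch (-c) p r * (c ^ r * p ^ r.choose 2)

lemma baseChangeKernel_shift {r j k : ℕ} :
    baseChangeKernel b c p (r + (j + k)) (r + j) /
        (qPoch p p j * qPoch (b * c) p (2 * r + j)) =
      qPoch c p r * qPoch (-b) p r * (c ^ r * p ^ r.choose 2) /
          (qPoch (-(b * c)) p (2 * (r + (j + k))) * qPoch (c ^ 2) (p ^ 2) (r + (j + k)) *
            qPoch (b * c) p (2 * r)) *
        (qPoch (c * p ^ r) p (j + k + k) * qPoch (-(b * p ^ r)) p j *
            ((c * p ^ r) ^ j * p ^ j.choose 2) /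
          (qPoch (p ^ 2) (p ^ 2) k * qPoch p p j * qPoch (b * p ^ r * (c * p ^ r)) p j)) := by
  rw [baseChangeKernel, show 2 * (r + (j + k)) - (r + j) = r + (j + k + k) by omega,
    show r + (j + k) - (r + j) = k by omega, qPoch_add c, qPoch_add (-b), qPoch_add (b * c),
    pow_add_mul_pow_choose_two, neg_mul,
    show b * c * p ^ (2 * r) = b * p ^ r * (c * p ^ r) by ring, div_mul_eq_mul_div, div_div,
    div_mul_div_comm]
  congr 1 <;> ring

theorem sum_antidiagonal_baseChangeKernel (hp₀ : p ≠ 0) {r N : ℕ}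
    (hp : qPoch (p ^ 2) (p ^ 2) N ≠ 0) (hc : qPoch (c ^ 2) (p ^ 2) (r + N) ≠ 0)
    (hbc : qPoch ((b * c) ^ 2) (p ^ 2) (2 * (r + N)) ≠ 0) :
    ∑ jk ∈ antidiagonal N, baseChangeKernel b c p (r + N) (r + jk.1) /
        (qPoch p p jk.1 * qPoch (b * c) p (2 * r + jk.1)) =
      baseChangeWeight b c p r /
        (qPoch (p ^ 2) (p ^ 2) N * qPoch ((b * c) ^ 2) (p ^ 2) (2 * r + N)) := by
  set b' := b * p ^ r
  set c' := c * p ^ r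
  have shift_bc : b * c * p ^ (2 * r) = b' * c' := by ring
  have shift_neg : -(b * c) * p ^ (2 * r + N) = -(b' * c' * p ^ N) := by ring
  have shift_sq : c ^ 2 * (p ^ 2) ^ r = c' ^ 2 := by ring
  have double : 2 * (r + N) = 2 * r + N + N := by ring
  rw [qPoch_add, shift_sq, qPoch_sq_sq c, mul_ne_zero_iff, mul_ne_zero_iff] at hc
  obtain ⟨⟨hc_pos, hc_neg⟩, hc_sq⟩ := hc
  rw [double, qPoch_sq_sq, mul_ne_zero_iff, qPoch_add (-(b * c)), shift_neg, mul_ne_zero_iff] at hbc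
  obtain ⟨hbc_pos, hbc_neg, hbc_neg'⟩ := hbc
  replace hbc_pos := qPoch_ne_zero_of_le hbc_pos (Nat.le_add_right _ N)
  rw [qPoch_add, shift_bc, mul_ne_zero_iff] at hbc_pos
  obtain ⟨hbc_pos, hbc_pos'⟩ := hbc_pos
  calc
    _ = qPoch c p r * qPoch (-b) p r * (c ^ r * p ^ r.choose 2) /
          (qPoch (-(b * c)) p (2 * (r + N)) * qPoch (c ^ 2) (p ^ 2) (r + N) *
            qPoch (b * c) p (2 * r)) *
        (qPoch (-(b' * c' * p ^ N)) p N * qPoch (c' ^ 2) (p ^ 2) N /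
          (qPoch (p ^ 2) (p ^ 2) N * qPoch (b' * c') p N)) := by
      rw [← sum_antidiagonal_qPoch_sq hp₀ hp hbc_pos', mul_sum]
      refine sum_congr rfl fun ⟨j, k⟩ hjk => ?_
      obtain rfl : j + k = N := mem_antidiagonal.mp hjk
      exact baseChangeKernel_shift
    _ = _ := by
      rw [baseChangeWeight, double, qPoch_add (-(b * c)), shift_neg, qPoch_add (c ^ 2),
        shift_sq, qPoch_sq_sq c, qPoch_sq_sq (b * c), qPoch_add (b * c), shift_bc]
      field_simp

end BaseChange

namespace IsBaileyPair

variable {a p : ℂ} {α β : ℕ → ℂ}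

theorem transform {a' p' : ℂ} {w : ℕ → ℂ} {κ : ℕ → ℕ → ℂ} (h : IsBaileyPair a p α β)
    (hκ : ∀ r N, ∑ jk ∈ antidiagonal N,
        κ (r + N) (r + jk.1) / (qPoch p p jk.1 * qPoch (a * p) p (2 * r + jk.1)) =
      w r / (qPoch p' p' N * qPoch (a' * p') p' (2 * r + N))) :
    IsBaileyPair a' p' (fun r => w r * α r) (fun n => ∑ k ∈ range (n + 1), κ n k * β k) := by
  intro n
  calc
    _ = ∑ k ∈ Ico 0 (n + 1), ∑ r ∈ Ico 0 (k + 1),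
          κ n k * (α r / (qPoch p p (k - r) * qPoch (a * p) p (k + r))) := by
      simp only [h _, mul_sum, range_eq_Ico]
    _ = ∑ r ∈ range (n + 1), ∑ k ∈ Ico r (n + 1),
          κ n k * (α r / (qPoch p p (k - r) * qPoch (a * p) p (k + r))) := by
      rw [← sum_Ico_Ico_comm, range_eq_Ico]
    _ = _ := by
      refine sum_congr rfl fun r hr => ?_
      obtain ⟨N, rfl⟩ := Nat.exists_eq_add_of_le (mem_range_succ_iff.mp hr)
      rw [sum_Ico_eq_sum_range, show r + N + 1 - r = N + 1 by omega, Nat.add_sub_cancel_left,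
        show r + N + r = 2 * r + N by ring, mul_div_right_comm, ← hκ, sum_mul,
        Nat.sum_antidiagonal_eq_sum_range_succ_mk]
      refine sum_congr rfl fun j _ => ?_
      rw [Nat.add_sub_cancel_left, show r + j + r = 2 * r + j by ring]
      ring

theorem base_change {b c : ℂ} (h : IsBaileyPair a p α β) (hp₀ : p ≠ 0) (habc : a * p = b * c)
    (hp : ∀ n, qPoch (p ^ 2) (p ^ 2) n ≠ 0) (hc : ∀ n, qPoch (c ^ 2) (p ^ 2) n ≠ 0)
    (ha : ∀ n, qPoch (a ^ 2 * p ^ 2) (p ^ 2) n ≠ 0) :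
    IsBaileyPair (a ^ 2) (p ^ 2) (fun r => baseChangeWeight b c p r * α r)
      (fun n => ∑ k ∈ range (n + 1), baseChangeKernel b c p n k * β k) := by
  rw [← mul_pow, habc] at ha
  refine h.transform fun r N => ?_
  rw [← mul_pow, habc]
  exact sum_antidiagonal_baseChangeKernel hp₀ (hp N) (hc _) (ha _)

end IsBaileyPair

lemma pow_mul_pow_choose_two_eq (q a B : ℂ) (k : ℕ) :
    (q * a ^ 2 / B) ^ k * (q ^ 2) ^ k.choose 2 =
      a ^ (2 * k) * B ^ (-(k : ℤ)) * q ^ (k ^ 2) := by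
  have square : k + 2 * k.choose 2 = k ^ 2 := by
    induction k with
    | zero => rfl
    | succ k ih =>
      rw [Nat.choose_succ_succ' k 1, Nat.choose_one_right]
      linarith
  rw [zpow_neg, zpow_natCast, ← square, pow_add, pow_mul, pow_mul, div_pow, mul_pow]
  ring

/-- Theorem 2.2: base change from `(a², q²)` to `(a⁴, q⁴)`. -/
theorem bailey_base_change_thm22 (q a B : ℂ)
    (hq : q ≠ 0) (ha : a ≠ 0) (hB : B ≠ 0)
    (hq1 : ∀ m : ℕ, 1 ≤ m → q ^ m ≠ 1)
    (ha2 : ∀ m : ℕ, 1 ≤ m → a ^ 2 * q ^ (2 * m) ≠ 1)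
    (ha4 : ∀ m : ℕ, 1 ≤ m → a ^ 4 * q ^ (4 * m) ≠ 1)
    (ha2' : ∀ j : ℕ, a ^ 2 * q ^ (2 * j) ≠ -1)
    (haB : ∀ j : ℕ, a ^ 4 * q ^ (4 * j + 2) ≠ B ^ 2)
    (α β : ℕ → ℂ)
    (hpair : IsBaileyPair (a ^ 2) (q ^ 2) α β) :
    IsBaileyPair (a ^ 4) (q ^ 4)
      (fun r => qPoch (-(B * q)) (q ^ 2) r / qPoch (-(q * a ^ 2 / B)) (q ^ 2) r *
        a ^ (2 * r) * B ^ (-(r : ℤ)) * q ^ (r ^ 2) * α r)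
      (fun n => ∑ k ∈ Finset.range (n + 1),
        (qPoch (q * a ^ 2 / B) (q ^ 2) (2 * n - k) * qPoch (-(B * q)) (q ^ 2) k) /
          (qPoch (-(q ^ 2 * a ^ 2)) (q ^ 2) (2 * n) * qPoch (a ^ 4 * q ^ 2 / B ^ 2) (q ^ 4) n *
            qPoch (q ^ 4) (q ^ 4) (n - k)) *
          a ^ (2 * k) * B ^ (-(k : ℤ)) * q ^ (k ^ 2) * β k) := by
  have hbc : a ^ 2 * q ^ 2 = B * q * (q * a ^ 2 / B) := by field_simp
  have hc : (q * a ^ 2 / B) ^ 2 = a ^ 4 * q ^ 2 / B ^ 2 := by ring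
  have sq_sq (x : ℂ) : (x ^ 2) ^ 2 = x ^ 4 := by ring
  have hpair' := hpair.base_change (pow_ne_zero 2 hq) hbc
    (qPoch_ne_zero_of_forall fun j => ?_) (qPoch_ne_zero_of_forall fun j => ?_)
    (qPoch_ne_zero_of_forall fun j => ?_)
  · simp only [baseChangeKernel, baseChangeWeight, pow_mul_pow_choose_two_eq, ← hbc, hc, sq_sq,
      mul_comm (a ^ 2) (q ^ 2)] at hpair'
    simpa only [← mul_assoc] using hpair'
  · convert hq1 (4 * (j + 1)) (by omega) using 1
    ring
  · intro h
    field_simp at h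
    exact haB j (by linear_combination h)
  · convert ha4 (j + 1) (by omega) using 1
    ring
end

section
/- For every integer n ≥ 0 and all nonzero complex numbers q and w, ∑_{s=-n}^{n} [2n choose n-s]_q · w^{s^2 - s} · (-1)^s = q^n · ∑_{s=-n}^{n} [2n choose n-s]_q · w^{s^2 - s} · (-q)^s, where [m choose j]_q denotes the Gaussian (q-binomial) coefficient. -/
/-- The Gaussian (q-binomial) coefficient `[m choose j]_q`, defined for every complex `q`
via the q-Pascal recurrence `[m+1, j+1]_q = [m, j]_q + q^{j+1} [m, j+1]_q`, so that it
agrees with the polynomial `∏_{i=1}^{j} (1 - q^{m-j+i})/(1 - q^i)` evaluated at `q`. -/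
noncomputable def qbin (q : ℂ) : ℕ → ℕ → ℂ
  | _, 0 => 1
  | 0, _ + 1 => 0
  | m + 1, j + 1 => qbin q m j + q ^ (j + 1) * qbin q m (j + 1)

/-!
The difference of the two sides is `∑ s, (-1)^s w^(s² - s) a s`, where
`a s = [2n choose n-s]_q (1 - q^(n+s))`. The ratio of consecutive Gaussian binomials turns `a s`
into `[2n choose n-s+1]_q (1 - q^(n-s+1))`, which is `a (1 - s)` by the symmetry of the Gaussian
binomials. So `a`, like `s² - s`, is invariant under `s ↦ 1 - s`, while `(-1)^s` changes sign, and
the terms cancel in pairs; the unpaired term `s = -n` vanishes because `a (-n) = 0`.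
-/

open Finset

section Gaussian

variable (q : ℂ)

lemma qbin_zero_right (m : ℕ) : qbin q m 0 = 1 := by
  rw [qbin]

lemma qbin_succ_succ (m j : ℕ) :
    qbin q (m + 1) (j + 1) = qbin q m j + q ^ (j + 1) * qbin q m (j + 1) := by
  rw [qbin]

lemma qbin_eq_zero_of_lt {m j : ℕ} (h : m < j) : qbin q m j = 0 := by
  induction m generalizing j with
  | zero => cases j with
    | zero => contradiction
    | succ j => rw [qbin]
  | succ m ih => cases j with
    | zero => contradiction
    | succ j => rw [qbin_succ_succ, ih (by omega), ih (by omega), mul_zero, add_zero]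

lemma qbin_self (m : ℕ) : qbin q m m = 1 := by
  induction m with
  | zero => exact qbin_zero_right q 0
  | succ m ih => rw [qbin_succ_succ, ih, qbin_eq_zero_of_lt q m.lt_succ_self, mul_zero, add_zero]

lemma qbin_succ_right_mul_one_sub_pow {m j k : ℕ} (h : j + k = m) :
    qbin q m (j + 1) * (1 - q ^ (j + 1)) = qbin q m j * (1 - q ^ k) := by
  induction m generalizing j k with
  | zero =>
    obtain ⟨rfl, rfl⟩ : j = 0 ∧ k = 0 := by omega
    rw [qbin_eq_zero_of_lt q (Nat.lt_succ_self 0), zero_mul, pow_zero, sub_self, mul_zero]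
  | succ m ih =>
    rcases j with _ | j
    · obtain rfl : k = m + 1 := by omega
      have ratio := ih (zero_add m)
      rw [qbin_zero_right] at ratio
      rw [qbin_succ_succ, qbin_zero_right, qbin_zero_right]
      linear_combination q * ratio
    rcases k with _ | k
    · rw [qbin_eq_zero_of_lt q (by omega), zero_mul, pow_zero, sub_self, mul_zero]
    · have ratio_left := ih (show j + (k + 1) = m by omega)
      have ratio_right := ih (show j + 1 + k = m by omega)
      rw [qbin_succ_succ, qbin_succ_succ]
      linear_combination ratio_left + q ^ (j + 2) * ratio_right

lemma qbin_symm {m j k : ℕ} (h : j + k = m) : qbin q m j = qbin q m k := by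
  induction m generalizing j k with
  | zero =>
    obtain ⟨rfl, rfl⟩ : j = 0 ∧ k = 0 := by omega
    rfl
  | succ m ih =>
    rcases j with _ | j
    · obtain rfl : k = m + 1 := by omega
      rw [qbin_zero_right, qbin_self]
    rcases k with _ | k
    · obtain rfl : j = m := by omega
      rw [qbin_zero_right, qbin_self]
    · have ratio := qbin_succ_right_mul_one_sub_pow q (show k + (j + 1) = m by omega)
      calc qbin q (m + 1) (j + 1)
          = qbin q m (k + 1) + q ^ (j + 1) * qbin q m k := by
            rw [qbin_succ_succ, ih (show j + (k + 1) = m by omega),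
              ih (show j + 1 + k = m by omega)]
        _ = qbin q m k + q ^ (k + 1) * qbin q m (k + 1) := by linear_combination ratio
        _ = qbin q (m + 1) (k + 1) := (qbin_succ_succ q m k).symm

lemma qbin_mul_one_sub_pow_symm {m j k : ℕ} (h : j + k + 1 = m) :
    qbin q m j * (1 - q ^ (k + 1)) = qbin q m k * (1 - q ^ (j + 1)) := by
  rw [← qbin_succ_right_mul_one_sub_pow q (show j + (k + 1) = m by omega),
    qbin_symm q (show j + 1 + k = m by omega)]

lemma qbin_central_mul_one_sub_zpow_reflect {n : ℕ} {s : ℤ} (hs : s ∈ Ioc (-(n : ℤ)) n) :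
    qbin q (2 * n) (n - (1 - s)).toNat * (1 - q ^ (n + (1 - s))) =
      qbin q (2 * n) (n - s).toNat * (1 - q ^ (n + s)) := by
  rw [mem_Ioc] at hs
  obtain ⟨j, hj⟩ := Int.eq_ofNat_of_zero_le (show 0 ≤ n - s by omega)
  obtain ⟨k, hk⟩ := Int.eq_ofNat_of_zero_le (show 0 ≤ n - (1 - s) by omega)
  rw [hj, hk, Int.toNat_natCast, Int.toNat_natCast,
    show n + (1 - s) = ((j + 1 : ℕ) : ℤ) by omega, show n + s = ((k + 1 : ℕ) : ℤ) by omega,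
    zpow_natCast, zpow_natCast]
  exact qbin_mul_one_sub_pow_symm q (by omega)

end Gaussian

lemma neg_one_zpow_one_sub {K : Type*} [DivisionRing K] (s : ℤ) :
    (-1 : K) ^ (1 - s) = -(-1) ^ s := by
  rw [zpow_sub₀ (neg_ne_zero.mpr one_ne_zero), zpow_one, div_eq_mul_inv, ← inv_zpow, inv_neg_one,
    neg_one_mul]

lemma sum_Ioc_neg_eq_zero_of_reflect {M : Type*} [AddCommGroup M] (n : ℤ) {f : ℤ → M}
    (hf : ∀ s ∈ Ioc (-n) n, f (1 - s) = -f s) : ∑ s ∈ Ioc (-n) n, f s = 0 := by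
  refine sum_involution (fun s _ ↦ 1 - s) (fun s hs ↦ ?_) (fun s _ _ ↦ by omega)
    (fun s hs ↦ ?_) (fun s _ ↦ sub_sub_cancel 1 s)
  · rw [hf s hs, add_neg_cancel]
  · rw [mem_Ioc] at hs ⊢
    omega

lemma sum_qbin_central_mul_one_sub_zpow_eq_zero (n : ℕ) (q : ℂ) {c : ℤ → ℂ}
    (hc : ∀ s, c (1 - s) = c s) :
    ∑ s ∈ Icc (-(n : ℤ)) n,
      qbin q (2 * n) (n - s).toNat * (1 - q ^ (n + s)) * c s * (-1) ^ s = 0 := by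
  rw [← add_sum_Ioc_eq_sum_Icc (by omega), add_neg_cancel, zpow_zero, sub_self, mul_zero,
    zero_mul, zero_mul, zero_add]
  refine sum_Ioc_neg_eq_zero_of_reflect n fun s hs ↦ ?_
  rw [qbin_central_mul_one_sub_zpow_reflect q hs, hc, neg_one_zpow_one_sub, mul_neg]

theorem qbinomial_sum_identity_general (n : ℕ) {q : ℂ} (hq : q ≠ 0) {c : ℤ → ℂ}
    (hc : ∀ s, c (1 - s) = c s) :
    ∑ s ∈ Icc (-(n : ℤ)) n, qbin q (2 * n) (n - s).toNat * c s * (-1) ^ s =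
      q ^ n * ∑ s ∈ Icc (-(n : ℤ)) n, qbin q (2 * n) (n - s).toNat * c s * (-q) ^ s := by
  rw [← sub_eq_zero, mul_sum, ← sum_sub_distrib,
    ← sum_qbin_central_mul_one_sub_zpow_eq_zero n q hc]
  refine sum_congr rfl fun s _ ↦ ?_
  rw [zpow_add₀ hq, zpow_natCast, neg_eq_neg_one_mul q, mul_zpow]
  ring

/-- The identity behind Proposition 4.1:
`∑_{s=-n}^n [2n choose n-s]_q w^{s²-s} (-1)^s = qⁿ ∑_{s=-n}^n [2n choose n-s]_q w^{s²-s} (-q)^s`. -/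
theorem qbinomial_sum_identity (n : ℕ) (q w : ℂ) (hq : q ≠ 0) (hw : w ≠ 0) :
    ∑ s ∈ Finset.Icc (-(n : ℤ)) (n : ℤ),
        qbin q (2 * n) ((n : ℤ) - s).toNat * w ^ (s ^ 2 - s) * (-1 : ℂ) ^ s =
      q ^ n * ∑ s ∈ Finset.Icc (-(n : ℤ)) (n : ℤ),
        qbin q (2 * n) ((n : ℤ) - s).toNat * w ^ (s ^ 2 - s) * (-q) ^ s :=
  qbinomial_sum_identity_general n hq fun s ↦ congrArg (w ^ ·) (by ring)
end
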